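/- Let φ : [0,1] → [0,∞) be concave, strictly increasing, with φ(0) = 0 and lim_{t→0+} φ(t) = 0, and suppose 0 < p_φ^0 and q_φ^0 < 1. Then the Cesàro–Lorentz space CΛ_φ[0,1] coincides with the weighted space L_1(w), where w(t) = ∫_0^{1−t} φ′(s)/(t+s) ds, with equivalence of norms: there exist constants c, C > 0 such that for every measurable f on [0,1], c·∫_0^1 |f(t)| w(t) dt ≤ ‖C|f|‖_{Λ_φ} ≤ C·∫_0^1 |f(t)| w(t) dt, where one side is finite if and only if the other is. -/

import Mathlib

/-!
Write `g = C|f|`, let `R` be a decreasing version of `φ'`, and let `w` be the weight. Substituting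
`x = t + s` gives `w(t) = ∫_t^1 R(x-t)/x dx`, which is the Lorentz norm of `x ↦ 1_{[t,1]}(x)/x`.

*Upper bound, with constant `1`.* Since `C|f|(x) = ∫ |f(t)| 1_{[t,1]}(x)/x dt`, the bound is
Minkowski's inequality for the Lorentz norm. It is obtained directly: a layer-cake decomposition in
both `g` and `R` (`upper_estimate`) reduces it to the weight `1_{(0,r)}`, for which
`∫_0^r g^* = ∫ g h` for a density `0 ≤ h ≤ 1` of mass at most `r` placed on the largest values of
`g` (`exists_test_density`). Tonelli moves `h` to the other side (`lintegral_cesaro_mul`), and the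
bathtub principle shows that `∫_t^1 h(x)/x dx` is largest when `h` is the indicator of `[t, t+r)`
(`bathtub_inv`).

*Lower bound.* The Hardy–Littlewood inequality with the weights `R(x)` and `R(1-x)`, followed by
Tonelli, shows that the norm of `g` dominates both `∫ |f| H` and `∫ |f| J`, where
`H(t) = ∫_t^1 φ'(x)/x dx` and `J(t) = ∫_t^1 φ'(1-x)/x dx ≥ φ(1-t)`. It remains to bound `w` by a
multiple of `H + φ(1 - ·)` (`weight_le`). For `t ≥ 1/2`, `w(t) ≤ 2 φ(1-t)`. For `t < 1/2`,
splitting the integral at `s = t` gives `w(t) ≤ φ(t)/t + H(t)`; the condition `p_φ^0 > 0` provides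
`K` with `2 φ(t) ≤ φ(Kt)` (`exists_reverse_doubling`), so that
`φ(t)/t ≤ (φ(Kt) - φ(t))/t ≤ K H(t)` when `Kt ≤ 1`, while `φ(t)/t ≤ K φ(1-t)` otherwise.
The resulting constants are `c = 1/(2(K+1))` and `C = 1`.
-/

open MeasureTheory Filter Topology ENNReal Set

noncomputable section

/-- The Cesàro operator applied to `|f|`, for `f` a function on `[0,1]` (as an
a.e.-equivalence class): `(C|f|)(x) = (1/x) ∫_0^x |f(t)| dt`, with values in `ℝ≥0∞`. -/
def cesaroFun01 (f : ℝ →ₘ[volume.restrict (Set.Icc 0 1)] ℝ) (x : ℝ) : ℝ≥0∞ :=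
  (∫⁻ t in Set.Ioc 0 x, ENNReal.ofReal |f t| ∂(volume.restrict (Set.Icc 0 1))) /
    ENNReal.ofReal x

/-- The decreasing rearrangement (with respect to Lebesgue measure on `[0,1]`) of an
`ℝ≥0∞`-valued function: `g^*(t) = inf{λ > 0 : m({x : g(x) > λ}) ≤ t}`. -/
def decRearrFun01 (g : ℝ → ℝ≥0∞) (t : ℝ) : ℝ≥0∞ :=
  sInf {l : ℝ≥0∞ | 0 < l ∧
    (volume.restrict (Set.Icc 0 1)) {x | l < g x} ≤ ENNReal.ofReal t}

/-- The norm of the Cesàro–Lorentz space `CΛ_φ[0,1]`: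
`‖f‖ = ‖C|f|‖_{Λ_φ} = ∫_0^1 (C|f|)^*(s) φ'(s) ds`. -/
def cesaroLorentzFunNorm (φ : ℝ → ℝ)
    (f : ℝ →ₘ[volume.restrict (Set.Icc 0 1)] ℝ) : ℝ≥0∞ :=
  ∫⁻ s in Set.Ioc (0 : ℝ) 1,
    decRearrFun01 (cesaroFun01 f) s * ENNReal.ofReal (deriv φ s)

/-- `φ̄⁰(s) = sup_{0 < t ≤ min(1, 1/s)} φ(st)/φ(t)`. -/
def phibarZero (φ : ℝ → ℝ) (s : ℝ) : ℝ :=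
  ⨆ t : {t : ℝ // 0 < t ∧ t ≤ min 1 (1 / s)}, φ (s * t) / φ t


/-! ### Layer-cake formulas and the bathtub principle -/

lemma volume_ofReal_lt (a : ℝ≥0∞) :
    volume {u : ℝ | 0 < u ∧ ENNReal.ofReal u < a} = a := by
  rcases eq_or_ne a ⊤ with rfl | ha
  · have : {u : ℝ | 0 < u ∧ ENNReal.ofReal u < ⊤} = Ioi 0 := by
      ext u; simp
    rw [this, Real.volume_Ioi]
  · have : {u : ℝ | 0 < u ∧ ENNReal.ofReal u < a} = Ioo 0 a.toReal := by
      ext u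
      simp only [mem_ofPred_eq, mem_Ioo]
      refine and_congr_right fun hu => ?_
      exact ENNReal.ofReal_lt_iff_lt_toReal hu.le ha
    rw [this, Real.volume_Ioo, sub_zero, ENNReal.ofReal_toReal ha]

lemma lintegral_layer_indicator (a : ℝ≥0∞) :
    ∫⁻ u in Ioi (0 : ℝ), {u : ℝ | ENNReal.ofReal u < a}.indicator 1 u = a := by
  have hm : MeasurableSet {u : ℝ | ENNReal.ofReal u < a} :=
    measurableSet_lt ENNReal.measurable_ofReal measurable_const
  rw [lintegral_indicator_one hm, Measure.restrict_apply hm]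
  convert volume_ofReal_lt a using 2
  ext u; simp [and_comm]

/-- Layer-cake formula with respect to the first factor of a product. -/
lemma lintegral_mul_layer (μ : Measure ℝ) [SFinite μ] {g k : ℝ → ℝ≥0∞}
    (hg : Measurable g) (hk : Measurable k) :
    ∫⁻ x, g x * k x ∂μ =
      ∫⁻ u in Ioi (0 : ℝ), ∫⁻ x, {x | ENNReal.ofReal u < g x}.indicator k x ∂μ := by
  have h1 : ∀ x, g x * k x =
      ∫⁻ u in Ioi (0 : ℝ), {x | ENNReal.ofReal u < g x}.indicator k x := by
    intro x
    have hm : MeasurableSet {u : ℝ | ENNReal.ofReal u < g x} :=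
      measurableSet_lt ENNReal.measurable_ofReal measurable_const
    conv_lhs => rw [← lintegral_layer_indicator (g x)]
    rw [← lintegral_mul_const _ (measurable_one.indicator hm)]
    refine lintegral_congr fun u => ?_
    by_cases h : ENNReal.ofReal u < g x <;> simp [h]
  simp_rw [h1]
  refine lintegral_lintegral_swap ?_
  have hm : MeasurableSet {p : ℝ × ℝ | ENNReal.ofReal p.2 < g p.1} :=
    measurableSet_lt (ENNReal.measurable_ofReal.comp measurable_snd) (hg.comp measurable_fst)
  exact ((hk.comp measurable_fst).indicator hm).aemeasurable

/-- **Bathtub principle.** Among densities `0 ≤ h ≤ 1` of total mass at most `μ I`, the integral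
against `k` is largest for the indicator of `I`, when `I` lies between level sets of `k`. -/
lemma bathtub (μ : Measure ℝ) {h k : ℝ → ℝ≥0∞} {I : Set ℝ} {c : ℝ≥0∞}
    (hh : Measurable h) (hk : Measurable k) (hI : MeasurableSet I) (h1 : ∀ x, h x ≤ 1)
    (hle : ∫⁻ x, h x ∂μ ≤ μ I) (hfin : μ I ≠ ⊤)
    (hin : ∀ x ∈ I, c ≤ k x) (hout : ∀ᵐ x ∂μ, x ∉ I → k x ≤ c) :
    ∫⁻ x, h x * k x ∂μ ≤ ∫⁻ x in I, k x ∂μ := by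
  have hIfin : ∫⁻ x in I, h x ∂μ ≠ ⊤ := by
    refine ne_top_of_le_ne_top hfin ?_
    calc ∫⁻ x in I, h x ∂μ ≤ ∫⁻ _ in I, 1 ∂μ := lintegral_mono fun x => h1 x
      _ = μ I := by simp
  have hsplit : μ I = ∫⁻ x in I, h x ∂μ + ∫⁻ x in I, (1 - h x) ∂μ := by
    rw [← lintegral_add_left hh]
    simp [add_tsub_cancel_of_le (h1 _)]
  -- the mass of `h` outside `I` is at most the mass missing inside `I`
  have hmass : ∫⁻ x in Iᶜ, h x ∂μ ≤ ∫⁻ x in I, (1 - h x) ∂μ := by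
    rw [hsplit, ← lintegral_add_compl h hI] at hle
    exact (ENNReal.add_le_add_iff_left hIfin).1 hle
  calc ∫⁻ x, h x * k x ∂μ
      = ∫⁻ x in I, h x * k x ∂μ + ∫⁻ x in Iᶜ, h x * k x ∂μ :=
        (lintegral_add_compl _ hI).symm
    _ ≤ ∫⁻ x in I, h x * k x ∂μ + ∫⁻ x in Iᶜ, h x * c ∂μ := by
        refine add_le_add le_rfl ?_
        refine lintegral_mono_ae ?_
        filter_upwards [ae_restrict_mem hI.compl, ae_restrict_of_ae hout] with x hx hx'
        exact mul_le_mul_right (hx' hx) _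
    _ = ∫⁻ x in I, h x * k x ∂μ + (∫⁻ x in Iᶜ, h x ∂μ) * c := by
        rw [lintegral_mul_const _ hh]
    _ ≤ ∫⁻ x in I, h x * k x ∂μ + (∫⁻ x in I, (1 - h x) ∂μ) * c := by gcongr
    _ = ∫⁻ x in I, h x * k x ∂μ + ∫⁻ x in I, (1 - h x) * c ∂μ := by
        rw [lintegral_mul_const _ (by fun_prop : Measurable fun x => 1 - h x)]
    _ ≤ ∫⁻ x in I, h x * k x ∂μ + ∫⁻ x in I, (1 - h x) * k x ∂μ := by
        refine add_le_add le_rfl ?_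
        refine setLIntegral_mono' hI fun x hx => ?_
        exact mul_le_mul_right (hin x hx) _
    _ = ∫⁻ x in I, k x ∂μ := by
        rw [← lintegral_add_left (by fun_prop : Measurable fun x => h x * k x)]
        refine lintegral_congr fun x => ?_
        rw [← add_mul, add_tsub_cancel_of_le (h1 x), one_mul]

/-! ### The decreasing rearrangement -/

/-- Lebesgue measure on the unit interval. -/
abbrev unitMeasure : Measure ℝ := volume.restrict (Set.Icc 0 1)

lemma unitMeasure_eq_Ioo : unitMeasure = volume.restrict (Ioo (0 : ℝ) 1) :=
  (Measure.restrict_congr_set Ioo_ae_eq_Icc).symm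

lemma unitMeasure_univ : unitMeasure univ = 1 := by simp

lemma ae_unitMeasure : ∀ᵐ x ∂unitMeasure, x ∈ Ioo (0 : ℝ) 1 := by
  rw [unitMeasure_eq_Ioo]
  exact ae_restrict_mem measurableSet_Ioo

lemma unitMeasure_le_one (A : Set ℝ) : unitMeasure A ≤ 1 :=
  (measure_mono (subset_univ A)).trans unitMeasure_univ.le

lemma decRearr_antitone (g : ℝ → ℝ≥0∞) : Antitone (decRearrFun01 g) := by
  intro s t hst
  refine sInf_le_sInf fun l hl => ⟨hl.1, hl.2.trans (ENNReal.ofReal_le_ofReal hst)⟩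

/-- The distribution function is right-continuous, so the infimum defining the rearrangement does
not overshoot. -/
lemma lt_decRearr {g : ℝ → ℝ≥0∞} {l : ℝ≥0∞} {t : ℝ}
    (h : ENNReal.ofReal t < unitMeasure {x | l < g x}) : l < decRearrFun01 g t := by
  by_contra hcon
  push Not at hcon
  refine absurd h (not_lt.2 ?_)
  rcases eq_or_ne l ⊤ with rfl | hl
  · simp
  obtain ⟨u, hu, hul, hut⟩ := exists_seq_strictAnti_tendsto' (lt_top_iff_ne_top.2 hl)
  have hU : {x | l < g x} = ⋃ n, {x | u n < g x} := by
    ext x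
    simp only [mem_ofPred_eq, mem_iUnion]
    refine ⟨fun hx => ?_, fun ⟨n, hn⟩ => (hul n).1.trans hn⟩
    exact (hut.eventually_lt_const hx).exists
  have hmono : Monotone fun n => {x | u n < g x} :=
    fun m n hmn x hx => (hu.antitone hmn).trans_lt hx
  rw [hU, hmono.measure_iUnion]
  refine iSup_le fun n => ?_
  obtain ⟨l', hl', hlt⟩ := sInf_lt_iff.1 (hcon.trans_lt (hul n).1)
  exact (measure_mono fun x (hx : u n < g x) => hlt.trans hx).trans hl'.2

lemma lt_decRearr_iff {g : ℝ → ℝ≥0∞} {l : ℝ≥0∞} (hl : 0 < l) {t : ℝ} :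
    l < decRearrFun01 g t ↔ ENNReal.ofReal t < unitMeasure {x | l < g x} := by
  refine ⟨fun h => ?_, lt_decRearr⟩
  by_contra hcon
  exact absurd h (not_lt.2 (sInf_le ⟨hl, not_lt.1 hcon⟩))

/-- The Lorentz functional `∫ g^* R` written through the distribution function of `g`. -/
lemma lintegral_decRearr_mul {g R : ℝ → ℝ≥0∞} (hR : Measurable R) :
    ∫⁻ s, decRearrFun01 g s * R s ∂unitMeasure =
      ∫⁻ l in Ioi (0 : ℝ), ∫⁻ s,
        {s | ENNReal.ofReal s < unitMeasure {x | ENNReal.ofReal l < g x}}.indicator R s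
          ∂unitMeasure := by
  rw [lintegral_mul_layer _ (decRearr_antitone g).measurable hR]
  refine setLIntegral_congr_fun measurableSet_Ioi fun l hl => ?_
  simp only [lt_decRearr_iff (ENNReal.ofReal_pos.2 hl)]

lemma unitMeasure_ofReal_lt {a : ℝ≥0∞} (ha : a ≤ 1) :
    unitMeasure {s | ENNReal.ofReal s < a} = a := by
  rw [unitMeasure_eq_Ioo, Measure.restrict_apply
    (measurableSet_lt ENNReal.measurable_ofReal measurable_const)]
  have : {s | ENNReal.ofReal s < a} ∩ Ioo (0 : ℝ) 1 = {u : ℝ | 0 < u ∧ ENNReal.ofReal u < a} := by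
    ext u
    simp only [mem_inter_iff, mem_ofPred_eq, mem_Ioo]
    refine ⟨fun h => ⟨h.2.1, h.1⟩, fun h => ⟨h.2, h.1, ?_⟩⟩
    have := h.2.trans_le ha
    simpa using this
  rw [this, volume_ofReal_lt]

/-- Integration against a decreasing weight is largest over the initial interval. -/
lemma setLIntegral_le_initial {R : ℝ → ℝ≥0∞} (hR : Antitone R) {A : Set ℝ}
    (hA : MeasurableSet A) :
    ∫⁻ s, A.indicator R s ∂unitMeasure ≤
      ∫⁻ s, {s | ENNReal.ofReal s < unitMeasure A}.indicator R s ∂unitMeasure := by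
  have hI : MeasurableSet {s | ENNReal.ofReal s < unitMeasure A} :=
    measurableSet_lt ENNReal.measurable_ofReal measurable_const
  have ha : unitMeasure A ≠ ⊤ := ne_top_of_le_ne_top one_ne_top (unitMeasure_le_one A)
  rw [lintegral_indicator hI]
  have := bathtub unitMeasure (h := A.indicator 1) (k := R) (c := R (unitMeasure A).toReal)
    (measurable_one.indicator hA) hR.measurable hI
    (fun x => by by_cases hx : x ∈ A <;> simp [hx])
    (by rw [lintegral_indicator_one hA, unitMeasure_ofReal_lt (unitMeasure_le_one A)])
    (ne_top_of_le_ne_top one_ne_top (unitMeasure_le_one _))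
    (fun x hx => hR ((ENNReal.ofReal_le_iff_le_toReal ha).1 (le_of_lt hx))) ?_
  · refine le_trans (le_of_eq (lintegral_congr fun x => ?_)) this
    by_cases hx : x ∈ A <;> simp [hx]
  · filter_upwards [ae_unitMeasure] with x hx hxI
    refine hR ?_
    simp only [not_lt] at hxI
    exact ENNReal.toReal_le_of_le_ofReal hx.1.le hxI

lemma unitMeasure_map_reflect : Measure.map (fun x : ℝ => 1 - x) unitMeasure = unitMeasure := by
  have h := (Measure.measurePreserving_sub_left (volume : Measure ℝ) 1).restrict_preimage
    (measurableSet_Icc (a := (0 : ℝ)) (b := 1))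
  have h2 : (fun x : ℝ => 1 - x) ⁻¹' Icc 0 1 = Icc 0 1 := by
    ext x; simp
  rw [h2] at h
  exact h.map_eq

/-- **Hardy–Littlewood inequality** for a decreasing weight. -/
lemma hardy_littlewood {g R : ℝ → ℝ≥0∞} (hg : Measurable g) (hR : Antitone R) :
    ∫⁻ x, g x * R x ∂unitMeasure ≤ ∫⁻ s, decRearrFun01 g s * R s ∂unitMeasure := by
  rw [lintegral_mul_layer _ hg hR.measurable, lintegral_decRearr_mul hR.measurable]
  exact lintegral_mono fun l => setLIntegral_le_initial hR (measurableSet_lt measurable_const hg)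

lemma decRearr_reflect {g : ℝ → ℝ≥0∞} (hg : Measurable g) :
    decRearrFun01 (fun x => g (1 - x)) = decRearrFun01 g := by
  have key : ∀ l : ℝ≥0∞, unitMeasure {x | l < g (1 - x)} = unitMeasure {x | l < g x} := by
    intro l
    conv_rhs => rw [← unitMeasure_map_reflect]
    rw [Measure.map_apply (by fun_prop) (measurableSet_lt measurable_const hg)]
    rfl
  funext t
  simp only [decRearrFun01, key]

lemma hardy_littlewood_reflect {g R : ℝ → ℝ≥0∞} (hg : Measurable g) (hR : Antitone R) :
    ∫⁻ x, g x * R (1 - x) ∂unitMeasure ≤ ∫⁻ s, decRearrFun01 g s * R s ∂unitMeasure := by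
  rw [← decRearr_reflect hg]
  refine le_trans (le_of_eq ?_) (hardy_littlewood (g := fun x => g (1 - x)) (by fun_prop) hR)
  have hRm := hR.measurable
  conv_lhs => rw [← unitMeasure_map_reflect]
  rw [lintegral_map (by fun_prop) (by fun_prop)]
  simp

/-- A density `0 ≤ h ≤ 1` of mass at most `r` concentrated on the largest values of `g`: it equals
`1` on `{g > λ}` and a constant on `{g = λ}`, where `λ` is the value of the rearrangement of `g`
at `r`. -/
lemma exists_test_density {g : ℝ → ℝ≥0∞} (hg : Measurable g) {r : ℝ≥0∞} (hr : r ≤ 1) :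
    ∃ h : ℝ → ℝ≥0∞, Measurable h ∧ (∀ x, h x ≤ 1) ∧ ∫⁻ x, h x ∂unitMeasure ≤ r ∧
      ∀ l : ℝ≥0∞, 0 < l → min (unitMeasure {x | l < g x}) r ≤
        ∫⁻ x, {x | l < g x}.indicator h x ∂unitMeasure := by
  have hrt : r ≠ ⊤ := ne_top_of_le_ne_top one_ne_top hr
  have hof : ENNReal.ofReal r.toReal = r := ENNReal.ofReal_toReal hrt
  have hmeas : ∀ l, MeasurableSet {x | l < g x} := fun l => measurableSet_lt measurable_const hg
  obtain ⟨L, hL⟩ : ∃ L, L = decRearrFun01 g r.toReal := ⟨_, rfl⟩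
  have ha : unitMeasure {x | L < g x} ≤ r := by
    by_contra hcon
    rw [not_le, ← hof] at hcon
    exact absurd (lt_decRearr hcon) (by simp [hL])
  rcases eq_or_ne L 0 with h0 | h0
  · refine ⟨{x | L < g x}.indicator 1, measurable_one.indicator (hmeas L), fun x => ?_, ?_, ?_⟩
    · by_cases hx : x ∈ {x | L < g x} <;> simp [hx]
    · rwa [lintegral_indicator_one (hmeas L)]
    · intro l hl
      refine (min_le_left _ _).trans (le_of_eq ?_)
      rw [← lintegral_indicator_one (hmeas l)]
      refine lintegral_congr fun x => ?_
      by_cases hx : l < g x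
      · have : L < g x := by rw [h0]; exact hl.trans hx
        simp [hx, this]
      · simp [hx]
  · have hLpos : 0 < L := pos_iff_ne_zero.2 h0
    have hb : r ≤ unitMeasure {x | L ≤ g x} := by
      obtain ⟨u, hu, hul, hut⟩ := exists_seq_strictMono_tendsto' hLpos
      have hI : {x | L ≤ g x} = ⋂ n, {x | u n < g x} := by
        ext x
        simp only [mem_ofPred_eq, mem_iInter]
        refine ⟨fun hx n => (hul n).2.trans_le hx, fun hx => ?_⟩
        exact le_of_tendsto' hut fun n => (hx n).le
      have hanti : Antitone fun n => {x | u n < g x} :=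
        fun m n hmn x hx => (hu.monotone hmn).trans_lt hx
      rw [hI, hanti.measure_iInter (fun n => (hmeas _).nullMeasurableSet)
        ⟨0, measure_ne_top _ _⟩]
      refine le_iInf fun n => ?_
      have := (lt_decRearr_iff (g := g) (t := r.toReal) (hul n).1).1 (by rw [← hL]; exact (hul n).2)
      rw [hof] at this
      exact this.le
    have hEm : MeasurableSet {x | g x = L} := measurableSet_eq_fun hg measurable_const
    have hab : unitMeasure {x | L ≤ g x} =
        unitMeasure {x | L < g x} + unitMeasure {x | g x = L} := by
      rw [← measure_union _ hEm]
      · congr 1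
        ext x
        simp [le_iff_lt_or_eq, eq_comm]
      · rw [Set.disjoint_left]
        intro x hx hx'
        exact absurd hx' (ne_of_gt hx)
    -- the fraction of the level set `{g = L}` that is needed to reach total mass `r`
    obtain ⟨θ, hθ1, hθ⟩ : ∃ θ : ℝ≥0∞, θ ≤ 1 ∧
        unitMeasure {x | L < g x} + θ * unitMeasure {x | g x = L} = r := by
      have hle : r - unitMeasure {x | L < g x} ≤ unitMeasure {x | g x = L} := by
        rw [tsub_le_iff_left, ← hab]; exact hb
      refine ⟨(r - unitMeasure {x | L < g x}) / unitMeasure {x | g x = L},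
        ENNReal.div_le_of_le_mul (by rwa [one_mul]), ?_⟩
      rw [ENNReal.div_mul_cancel', add_tsub_cancel_of_le ha]
      · intro h; rw [h] at hle; exact le_antisymm hle zero_le
      · intro h; exact absurd h (measure_ne_top _ _)
    have hmass : ∫⁻ x, ({x | L < g x}.indicator 1 x + {x | g x = L}.indicator (fun _ => θ) x)
        ∂unitMeasure = r := by
      rw [lintegral_add_left (measurable_one.indicator (hmeas L)),
        lintegral_indicator_one (hmeas L), lintegral_indicator_const hEm, hθ]
    refine ⟨fun x => {x | L < g x}.indicator 1 x + {x | g x = L}.indicator (fun _ => θ) x,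
      (measurable_one.indicator (hmeas L)).add (measurable_const.indicator hEm), fun x => ?_,
      hmass.le, fun l _ => ?_⟩
    · rcases lt_trichotomy (g x) L with h | h | h
      · simp [h.not_gt, h.ne]
      · simp [h, hθ1]
      · simp [h, h.ne']
    · rcases lt_or_ge l L with hlL | hlL
      · refine (min_le_right _ _).trans ?_
        rw [← hmass]
        refine lintegral_mono fun x => ?_
        by_cases hx : l < g x
        · simp [hx]
        · have h1 : ¬ L < g x := fun h => hx (hlL.trans h)
          have h2 : g x ≠ L := fun h => hx (h ▸ hlL)
          simp [h1, h2]
      · refine (min_le_left _ _).trans ?_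
        rw [← lintegral_indicator_one (hmeas l)]
        refine lintegral_mono fun x => ?_
        by_cases hx : l < g x
        · have h1 : L < g x := hlL.trans_lt hx
          simp [hx, h1]
        · simp [hx]

/-! ### The Cesàro operator and Tonelli's theorem -/

lemma measurable_abs_coe (f : ℝ →ₘ[volume.restrict (Set.Icc 0 1)] ℝ) :
    Measurable fun t => ENNReal.ofReal |f t| := by
  have := f.stronglyMeasurable.measurable
  fun_prop

lemma measurable_cesaro (f : ℝ →ₘ[volume.restrict (Set.Icc 0 1)] ℝ) :
    Measurable (cesaroFun01 f) := by
  refine Measurable.div (Monotone.measurable fun x y hxy => ?_) ENNReal.measurable_ofReal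
  exact lintegral_mono_set (Ioc_subset_Ioc_right hxy)

/-- Duality for the Cesàro operator: its adjoint sends `ψ` to `t ↦ ∫_t^1 ψ(x)/x dx`. -/
lemma lintegral_cesaro_mul (f : ℝ →ₘ[volume.restrict (Set.Icc 0 1)] ℝ) {ψ : ℝ → ℝ≥0∞}
    (hψ : Measurable ψ) :
    ∫⁻ x, cesaroFun01 f x * ψ x ∂unitMeasure =
      ∫⁻ t, ENNReal.ofReal |f t| *
        ∫⁻ x, (Ici t).indicator (fun x => ψ x / ENNReal.ofReal x) x ∂unitMeasure
          ∂unitMeasure := by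
  have hF := measurable_abs_coe f
  have hm : MeasurableSet {p : ℝ × ℝ | p.2 ≤ p.1} := measurableSet_le measurable_snd measurable_fst
  have h1 : ∀ x, cesaroFun01 f x * ψ x = ∫⁻ t, ENNReal.ofReal |f t| *
      (Ici t).indicator (fun x => ψ x / ENNReal.ofReal x) x ∂unitMeasure := by
    intro x
    rw [cesaroFun01, ← lintegral_indicator measurableSet_Ioc, div_eq_mul_inv, mul_assoc,
      ← lintegral_mul_const _ (hF.indicator measurableSet_Ioc)]
    refine lintegral_congr_ae ?_
    filter_upwards [ae_unitMeasure] with t ht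
    by_cases htx : t ≤ x
    · simp [htx, ht.1, div_eq_mul_inv, mul_comm]
    · simp [htx]
  simp_rw [h1]
  rw [lintegral_lintegral_swap]
  · refine lintegral_congr fun t => ?_
    rw [lintegral_const_mul]
    exact Measurable.indicator (by fun_prop) measurableSet_Ici
  · refine Measurable.aemeasurable ?_
    have : Measurable ({p : ℝ × ℝ | p.2 ≤ p.1}.indicator
        fun p => ψ p.1 / ENNReal.ofReal p.1) := Measurable.indicator (by fun_prop) hm
    exact (hF.comp measurable_snd).mul this

/-! ### The upper estimate -/

/-- Among sets (or densities) of mass `r`, the integral of `1/x` over `[t,1]` is largest over the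
interval `[t, t+r)`. -/
lemma bathtub_inv {h : ℝ → ℝ≥0∞} (hh : Measurable h) (h1 : ∀ x, h x ≤ 1) {r : ℝ≥0∞} (hr : r ≤ 1)
    (hle : ∫⁻ x, h x ∂unitMeasure ≤ r) {t : ℝ} (ht : t ∈ Ioo (0 : ℝ) 1) :
    ∫⁻ x, (Ici t).indicator (fun x => h x / ENNReal.ofReal x) x ∂unitMeasure ≤
      ∫⁻ x, {x | t ≤ x ∧ ENNReal.ofReal (x - t) < r}.indicator
        (fun x => (ENNReal.ofReal x)⁻¹) x ∂unitMeasure := by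
  have hrt : r ≠ ⊤ := ne_top_of_le_ne_top one_ne_top hr
  have hI : MeasurableSet {x | t ≤ x ∧ ENNReal.ofReal (x - t) < r} :=
    measurableSet_Ici.inter (measurableSet_lt (f := fun x => ENNReal.ofReal (x - t)) (by fun_prop)
      measurable_const)
  rcases lt_or_ge r (ENNReal.ofReal (1 - t)) with hcase | hcase
  · have hk : Measurable ((Ici t).indicator fun x => (ENNReal.ofReal x)⁻¹) :=
      Measurable.indicator (by fun_prop) measurableSet_Ici
    have hrlt : r.toReal < 1 - t := (ENNReal.lt_ofReal_iff_toReal_lt hrt).1 hcase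
    have hr0 : 0 ≤ r.toReal := ENNReal.toReal_nonneg
    have hmI : r ≤ unitMeasure {x | t ≤ x ∧ ENNReal.ofReal (x - t) < r} := by
      have hsub : Ico t (t + r.toReal) ⊆
          {x | t ≤ x ∧ ENNReal.ofReal (x - t) < r} ∩ Icc 0 1 := by
        rintro x ⟨hx1, hx2⟩
        refine ⟨⟨hx1, ?_⟩, by linarith [ht.1], by linarith⟩
        rw [ENNReal.ofReal_lt_iff_lt_toReal (by linarith) hrt]
        linarith
      rw [Measure.restrict_apply hI]
      refine le_trans (le_of_eq ?_) (measure_mono hsub)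
      rw [Real.volume_Ico, add_sub_cancel_left, ENNReal.ofReal_toReal hrt]
    have := bathtub unitMeasure (c := (ENNReal.ofReal (t + r.toReal))⁻¹) hh hk hI h1
      (hle.trans hmI) (measure_ne_top _ _) ?_ ?_
    · refine le_trans (le_of_eq (lintegral_congr fun x => ?_)) (this.trans (le_of_eq ?_))
      · by_cases hx : t ≤ x <;> simp [hx, div_eq_mul_inv]
      · rw [lintegral_indicator hI]
        refine setLIntegral_congr_fun hI fun x hx => ?_
        simp [hx.1]
    · rintro x ⟨hx1, hx2⟩
      rw [indicator_of_mem (show x ∈ Ici t from hx1), ENNReal.inv_le_inv]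
      refine ENNReal.ofReal_le_ofReal ?_
      rw [ENNReal.ofReal_lt_iff_lt_toReal (by linarith) hrt] at hx2
      linarith
    · refine Eventually.of_forall fun x hx => ?_
      by_cases hxt : t ≤ x
      · rw [indicator_of_mem (show x ∈ Ici t from hxt), ENNReal.inv_le_inv]
        refine ENNReal.ofReal_le_ofReal ?_
        have : ¬ ENNReal.ofReal (x - t) < r := fun h => hx ⟨hxt, h⟩
        rw [ENNReal.ofReal_lt_iff_lt_toReal (by linarith) hrt] at this
        linarith
      · simp [hxt]
  · refine lintegral_mono_ae ?_
    filter_upwards [ae_unitMeasure] with x hx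
    by_cases hxt : t ≤ x
    · have : ENNReal.ofReal (x - t) < r := by
        refine lt_of_lt_of_le ?_ hcase
        rw [ENNReal.ofReal_lt_ofReal_iff] <;> linarith [hx.2, ht.2]
      rw [indicator_of_mem (show x ∈ Ici t from hxt), indicator_of_mem (by exact ⟨hxt, this⟩),
        div_eq_mul_inv]
      exact mul_le_of_le_one_left zero_le (h1 x)
    · simp [hxt]

/-- The upper estimate for the weight `R` replaced by the indicator of an interval of length `r`. -/
lemma lintegral_min_le (f : ℝ →ₘ[volume.restrict (Set.Icc 0 1)] ℝ) {r : ℝ≥0∞} (hr : r ≤ 1) :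
    ∫⁻ l in Ioi (0 : ℝ), min (unitMeasure {x | ENNReal.ofReal l < cesaroFun01 f x}) r ≤
      ∫⁻ t, ENNReal.ofReal |f t| *
        ∫⁻ x, {x | t ≤ x ∧ ENNReal.ofReal (x - t) < r}.indicator
          (fun x => (ENNReal.ofReal x)⁻¹) x ∂unitMeasure ∂unitMeasure := by
  obtain ⟨h, hh, h1, hle, hmin⟩ := exists_test_density (measurable_cesaro f) hr
  calc ∫⁻ l in Ioi (0 : ℝ), min (unitMeasure {x | ENNReal.ofReal l < cesaroFun01 f x}) r
      ≤ ∫⁻ l in Ioi (0 : ℝ), ∫⁻ x, {x | ENNReal.ofReal l < cesaroFun01 f x}.indicator h x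
          ∂unitMeasure :=
        setLIntegral_mono' measurableSet_Ioi fun l hl => hmin _ (ENNReal.ofReal_pos.2 hl)
    _ = ∫⁻ x, cesaroFun01 f x * h x ∂unitMeasure :=
        (lintegral_mul_layer _ (measurable_cesaro f) hh).symm
    _ = _ := lintegral_cesaro_mul f hh
    _ ≤ _ := by
        refine lintegral_mono_ae ?_
        filter_upwards [ae_unitMeasure] with t ht
        exact mul_le_mul_right (bathtub_inv hh h1 hr hle ht) _

/-- The norm of `C|f|` in the Lorentz space with decreasing weight `R` is at most `∫ |f| W`, where
`W(t) = ∫_t^1 R(x-t)/x dx` is the Lorentz norm of `x ↦ 1_{[t,1]}(x)/x`. -/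
lemma upper_estimate (f : ℝ →ₘ[volume.restrict (Set.Icc 0 1)] ℝ) {R : ℝ → ℝ≥0∞}
    (hR : Antitone R) :
    ∫⁻ s, decRearrFun01 (cesaroFun01 f) s * R s ∂unitMeasure ≤
      ∫⁻ t, ENNReal.ofReal |f t| *
        ∫⁻ x, (Ici t).indicator (fun x => R (x - t) / ENNReal.ofReal x) x ∂unitMeasure
          ∂unitMeasure := by
  have hF := measurable_abs_coe f
  have hRm := hR.measurable
  obtain ⟨D, hD⟩ : ∃ D : ℝ → ℝ≥0∞,
      D = fun l => unitMeasure {x | ENNReal.ofReal l < cesaroFun01 f x} := ⟨_, rfl⟩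
  obtain ⟨r, hr⟩ : ∃ r : ℝ → ℝ≥0∞,
      r = fun u => unitMeasure {s | ENNReal.ofReal u < R s} := ⟨_, rfl⟩
  have hDm : Measurable D := by
    refine Antitone.measurable fun a b hab => ?_
    rw [hD]
    exact measure_mono fun x hx => (ENNReal.ofReal_le_ofReal hab).trans_lt hx
  have hrm : Measurable r := by
    refine Antitone.measurable fun a b hab => ?_
    rw [hr]
    exact measure_mono fun x hx => (ENNReal.ofReal_le_ofReal hab).trans_lt hx
  have hr1 : ∀ u, r u ≤ 1 := fun u => by rw [hr]; exact unitMeasure_le_one _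
  have hD1 : ∀ u, D u ≤ 1 := fun u => by rw [hD]; exact unitMeasure_le_one _
  calc ∫⁻ s, decRearrFun01 (cesaroFun01 f) s * R s ∂unitMeasure
      = ∫⁻ l in Ioi (0 : ℝ), ∫⁻ s, {s | ENNReal.ofReal s < D l}.indicator R s ∂unitMeasure := by
        rw [lintegral_decRearr_mul hRm, hD]
    _ ≤ ∫⁻ l in Ioi (0 : ℝ), ∫⁻ u in Ioi (0 : ℝ), min (D l) (r u) := by
        refine lintegral_mono fun l => ?_
        have hm : MeasurableSet {s | ENNReal.ofReal s < D l} :=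
          measurableSet_lt ENNReal.measurable_ofReal measurable_const
        have h := lintegral_mul_layer unitMeasure hRm (measurable_one.indicator hm)
        calc ∫⁻ s, {s | ENNReal.ofReal s < D l}.indicator R s ∂unitMeasure
            = ∫⁻ s, R s * {s | ENNReal.ofReal s < D l}.indicator 1 s ∂unitMeasure := by
              refine lintegral_congr fun s => ?_
              by_cases hs : ENNReal.ofReal s < D l <;> simp [hs]
          _ = _ := h
          _ ≤ _ := by
              refine lintegral_mono fun u => ?_
              have hm2 : MeasurableSet {s | ENNReal.ofReal u < R s} :=
                measurableSet_lt measurable_const hRm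
              rw [indicator_indicator, lintegral_indicator_one (hm2.inter hm)]
              refine le_min ?_ ?_
              · refine (measure_mono inter_subset_right).trans ?_
                rw [unitMeasure_ofReal_lt (hD1 l)]
              · rw [hr]
                exact measure_mono inter_subset_left
    _ = ∫⁻ u in Ioi (0 : ℝ), ∫⁻ l in Ioi (0 : ℝ), min (D l) (r u) := by
        refine lintegral_lintegral_swap (Measurable.aemeasurable ?_)
        exact (hDm.comp measurable_fst).min (hrm.comp measurable_snd)
    _ ≤ ∫⁻ u in Ioi (0 : ℝ), ∫⁻ t, ENNReal.ofReal |f t| *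
          ∫⁻ x, {x | t ≤ x ∧ ENNReal.ofReal (x - t) < r u}.indicator
            (fun x => (ENNReal.ofReal x)⁻¹) x ∂unitMeasure ∂unitMeasure := by
        refine lintegral_mono fun u => ?_
        rw [hD]
        exact lintegral_min_le f (hr1 u)
    _ = ∫⁻ t, (∫⁻ u in Ioi (0 : ℝ), ENNReal.ofReal |f t| *
          ∫⁻ x, {x | t ≤ x ∧ ENNReal.ofReal (x - t) < r u}.indicator
            (fun x => (ENNReal.ofReal x)⁻¹) x ∂unitMeasure) ∂unitMeasure := by
        refine lintegral_lintegral_swap (Measurable.aemeasurable ?_)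
        refine (hF.comp measurable_snd).mul ?_
        have hm3 : MeasurableSet {q : (ℝ × ℝ) × ℝ |
            q.1.2 ≤ q.2 ∧ ENNReal.ofReal (q.2 - q.1.2) < r q.1.1} :=
          (measurableSet_le (f := fun q : (ℝ × ℝ) × ℝ => q.1.2) (g := fun q => q.2)
            (by fun_prop) (by fun_prop)).inter
            (measurableSet_lt (f := fun q : (ℝ × ℝ) × ℝ => ENNReal.ofReal (q.2 - q.1.2))
              (g := fun q => r q.1.1) (by fun_prop) (by fun_prop))
        have : Measurable ({q : (ℝ × ℝ) × ℝ |
            q.1.2 ≤ q.2 ∧ ENNReal.ofReal (q.2 - q.1.2) < r q.1.1}.indicator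
              fun q => (ENNReal.ofReal q.2)⁻¹) := Measurable.indicator (by fun_prop) hm3
        exact this.lintegral_prod_right'
    _ ≤ _ := by
        refine lintegral_mono_ae ?_
        filter_upwards with t
        have hm4 : MeasurableSet {q : ℝ × ℝ | t ≤ q.2 ∧ ENNReal.ofReal (q.2 - t) < r q.1} :=
          (measurableSet_le (f := fun _ : ℝ × ℝ => t) (g := fun q => q.2)
            (by fun_prop) (by fun_prop)).inter
            (measurableSet_lt (f := fun q : ℝ × ℝ => ENNReal.ofReal (q.2 - t))
              (g := fun q => r q.1) (by fun_prop) (by fun_prop))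
        have hm5 : Measurable ({q : ℝ × ℝ | t ≤ q.2 ∧ ENNReal.ofReal (q.2 - t) < r q.1}.indicator
            fun q => (ENNReal.ofReal q.2)⁻¹) := Measurable.indicator (by fun_prop) hm4
        have hm6 : Measurable fun u => ∫⁻ x,
            {x | t ≤ x ∧ ENNReal.ofReal (x - t) < r u}.indicator
              (fun x => (ENNReal.ofReal x)⁻¹) x ∂unitMeasure := hm5.lintegral_prod_right'
        rw [lintegral_const_mul _ hm6]
        refine mul_le_mul_right ?_ _
        refine (lintegral_lintegral_swap (f := fun u x =>
          {x | t ≤ x ∧ ENNReal.ofReal (x - t) < r u}.indicator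
            (fun x => (ENNReal.ofReal x)⁻¹) x) hm5.aemeasurable).trans_le ?_
        refine lintegral_mono_ae ?_
        filter_upwards with x
        by_cases hxt : t ≤ x
        · rw [indicator_of_mem (show x ∈ Ici t from hxt), ← lintegral_layer_indicator (R (x - t)),
            div_eq_mul_inv, ← lintegral_mul_const]
          · refine lintegral_mono fun u => ?_
            by_cases hu : ENNReal.ofReal (x - t) < r u
            · have : ENNReal.ofReal u < R (x - t) := by
                -- otherwise `{R > u}` is contained in `(0, x - t)`
                by_contra hcon
                refine absurd hu (not_lt.2 ?_)
                have hsub : {s | ENNReal.ofReal u < R s} ⊆ Iio (x - t) := by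
                  intro s hs
                  by_contra hs'
                  exact hcon (lt_of_lt_of_le hs (hR (not_lt.1 hs')))
                rw [hr, unitMeasure_eq_Ioo]
                refine (measure_mono hsub).trans ?_
                rw [Measure.restrict_apply measurableSet_Iio]
                refine (measure_mono (t := Ioo 0 (x - t)) fun s hs => ⟨hs.2.1, hs.1⟩).trans ?_
                simp
              simp [hxt, hu, this]
            · simp [hu]
          · exact measurable_one.indicator
              (measurableSet_lt ENNReal.measurable_ofReal measurable_const)
        · simp [hxt]

/-! ### The derivative of the concave function -/

/-- A globally decreasing version of `φ'` on `(0,1)`: the right derivative there, extended by `⊤`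
to the left and by `0` to the right. -/
def decWeight (φ : ℝ → ℝ) (s : ℝ) : ℝ≥0∞ :=
  if s ≤ 0 then ⊤ else if 1 ≤ s then 0 else ENNReal.ofReal (derivWithin φ (Ioi s) s)

lemma decWeight_of_mem (φ : ℝ → ℝ) {s : ℝ} (hs : s ∈ Ioo (0 : ℝ) 1) :
    decWeight φ s = ENNReal.ofReal (derivWithin φ (Ioi s) s) := by
  simp [decWeight, hs.1.not_ge, hs.2.not_ge]

lemma hasDerivWithinAt_right {φ : ℝ → ℝ} (hconc : ConcaveOn ℝ (Icc 0 1) φ) {s : ℝ}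
    (hs : s ∈ Ioo (0 : ℝ) 1) : HasDerivWithinAt φ (derivWithin φ (Ioi s) s) (Ioi s) s := by
  have h := hconc.neg.differentiableWithinAt_Ioi_of_mem_interior (x := s) (by rwa [interior_Icc])
  have h2 := h.neg
  rw [neg_neg] at h2
  exact h2.hasDerivWithinAt

lemma antitone_decWeight {φ : ℝ → ℝ} (hconc : ConcaveOn ℝ (Icc 0 1) φ) :
    Antitone (decWeight φ) := by
  have h := hconc.neg.monotoneOn_rightDeriv
  rw [interior_Icc] at h
  have h2 : AntitoneOn (fun s => derivWithin φ (Ioi s) s) (Ioo 0 1) := by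
    intro x hx y hy hxy
    have := h hx hy hxy
    have e : ∀ z, derivWithin (-φ) (Ioi z) z = - derivWithin φ (Ioi z) z := fun z => by
      exact derivWithin.neg
    simp only [e] at this
    exact neg_le_neg_iff.1 this
  intro x y hxy
  by_cases hx : x ≤ 0
  · simp [decWeight, hx]
  by_cases hy : 1 ≤ y
  · have : ¬ y ≤ 0 := by linarith
    simp [decWeight, hy, this]
  have hx' : x ∈ Ioo (0 : ℝ) 1 := ⟨by linarith, by linarith⟩
  have hy' : y ∈ Ioo (0 : ℝ) 1 := ⟨by linarith, by linarith⟩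
  rw [decWeight_of_mem φ hx', decWeight_of_mem φ hy']
  exact ENNReal.ofReal_le_ofReal (h2 hx' hy' hxy)

lemma rightDeriv_nonneg {φ : ℝ → ℝ} (hconc : ConcaveOn ℝ (Icc 0 1) φ)
    (hmono : StrictMonoOn φ (Icc 0 1)) {s : ℝ} (hs : s ∈ Ioo (0 : ℝ) 1) :
    0 ≤ derivWithin φ (Ioi s) s := by
  have h1 : (1 : ℝ) ∈ Icc (0 : ℝ) 1 := by simp
  have hs' : s ∈ Icc (0 : ℝ) 1 := Ioo_subset_Icc_self hs
  refine le_trans ?_ (hconc.slope_le_rightDeriv hs' h1 hs.2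
    (hasDerivWithinAt_right hconc hs).differentiableWithinAt)
  rw [slope_def_field]
  exact div_nonneg (sub_nonneg.2 (hmono hs' h1 hs.2).le) (sub_nonneg.2 hs.2.le)

lemma ae_rightDeriv_eq {φ : ℝ → ℝ} (hmono : StrictMonoOn φ (Icc 0 1)) :
    ∀ᵐ s, s ∈ Ioo (0 : ℝ) 1 → derivWithin φ (Ioi s) s = deriv φ s := by
  filter_upwards [hmono.monotoneOn.ae_differentiableWithinAt_of_mem] with s h hs
  have h1 := (h (Ioo_subset_Icc_self hs)).differentiableAt (Icc_mem_nhds hs.1 hs.2)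
  exact h1.derivWithin (uniqueDiffWithinAt_Ioi s)

lemma continuousOn_phi {φ : ℝ → ℝ} (hconc : ConcaveOn ℝ (Icc 0 1) φ)
    (hmono : StrictMonoOn φ (Icc 0 1)) (h0 : φ 0 = 0) (h0' : Tendsto φ (𝓝[>] 0) (𝓝 0)) :
    ContinuousOn φ (Icc 0 1) := by
  intro x hx
  rcases eq_or_lt_of_le hx.1 with rfl | hx0
  · have : ContinuousWithinAt φ (Ioi 0) 0 := by
      rw [ContinuousWithinAt, h0]; exact h0'
    exact (continuousWithinAt_Ioi_iff_Ici.1 this).mono Icc_subset_Ici_self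
  rcases eq_or_lt_of_le hx.2 with rfl | hx1
  · -- `x φ(1) ≤ φ(x) ≤ φ(1)` squeezes `φ` at the right endpoint
    have hlow : Tendsto (fun x : ℝ => x * φ 1) (𝓝[Icc 0 1] 1) (𝓝 (φ 1)) := by
      have : Tendsto (fun x : ℝ => x * φ 1) (𝓝 1) (𝓝 (1 * φ 1)) :=
        (continuous_id.mul continuous_const).tendsto 1
      rw [one_mul] at this
      exact this.mono_left nhdsWithin_le_nhds
    refine tendsto_of_tendsto_of_tendsto_of_le_of_le' hlow tendsto_const_nhds ?_ ?_
    · filter_upwards [self_mem_nhdsWithin] with y hy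
      have := hconc.2 (x := 1) (y := 0) (by simp) (by simp) hy.1 (sub_nonneg.2 hy.2) (by ring)
      simpa [h0] using this
    · filter_upwards [self_mem_nhdsWithin] with y hy
      exact hmono.monotoneOn hy (by simp) hy.2
  · have h := hconc.continuousOn_interior
    rw [interior_Icc] at h
    exact (h.continuousAt (Ioo_mem_nhds hx0 hx1)).continuousWithinAt

lemma integrableOn_rightDeriv {φ : ℝ → ℝ} (hconc : ConcaveOn ℝ (Icc 0 1) φ)
    (hmono : StrictMonoOn φ (Icc 0 1)) (h0 : φ 0 = 0) (h0' : Tendsto φ (𝓝[>] 0) (𝓝 0)) :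
    IntegrableOn (fun s => derivWithin φ (Ioi s) s) (Ioc 0 1) :=
  intervalIntegral.integrableOn_deriv_right_of_nonneg (continuousOn_phi hconc hmono h0 h0')
    (fun _ hx => hasDerivWithinAt_right hconc hx) fun _ hx => rightDeriv_nonneg hconc hmono hx

lemma lintegral_decWeight {φ : ℝ → ℝ} (hconc : ConcaveOn ℝ (Icc 0 1) φ)
    (hmono : StrictMonoOn φ (Icc 0 1)) (h0 : φ 0 = 0) (h0' : Tendsto φ (𝓝[>] 0) (𝓝 0))
    {a b : ℝ} (ha : 0 ≤ a) (hab : a ≤ b) (hb : b ≤ 1) :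
    ∫⁻ s in Ioo a b, decWeight φ s = ENNReal.ofReal (φ b - φ a) := by
  have hsub : Ioo a b ⊆ Ioo (0 : ℝ) 1 := Ioo_subset_Ioo ha hb
  have hmass : IntegrableOn (fun s => derivWithin φ (Ioi s) s) (Ioc a b) :=
    (integrableOn_rightDeriv hconc hmono h0 h0').mono_set (Ioc_subset_Ioc ha hb)
  have hftc := intervalIntegral.integral_eq_sub_of_hasDeriv_right_of_le hab
    ((continuousOn_phi hconc hmono h0 h0').mono (Icc_subset_Icc ha hb))
    (fun x hx => hasDerivWithinAt_right hconc (hsub hx))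
    ((intervalIntegrable_iff_integrableOn_Ioc_of_le hab).2 hmass)
  rw [← hftc, intervalIntegral.integral_of_le hab, integral_Ioc_eq_integral_Ioo,
    ofReal_integral_eq_lintegral_ofReal (hmass.mono_set Ioo_subset_Ioc_self)]
  · exact setLIntegral_congr_fun measurableSet_Ioo fun s hs => decWeight_of_mem φ (hsub hs)
  · filter_upwards [ae_restrict_mem measurableSet_Ioo] with s hs
    exact rightDeriv_nonneg hconc hmono (hsub hs)

/-- The weight of the statement, as a Lebesgue integral of the decreasing version of `φ'`. -/
lemma weight_eq {φ : ℝ → ℝ} (hconc : ConcaveOn ℝ (Icc 0 1) φ)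
    (hmono : StrictMonoOn φ (Icc 0 1)) (h0 : φ 0 = 0) (h0' : Tendsto φ (𝓝[>] 0) (𝓝 0))
    {t : ℝ} (ht : t ∈ Ioo (0 : ℝ) 1) :
    ENNReal.ofReal (∫ s in Ioc (0 : ℝ) (1 - t), deriv φ s / (t + s)) =
      ∫⁻ s in Ioo 0 (1 - t), decWeight φ s / ENNReal.ofReal (t + s) := by
  have hsub : Ioo 0 (1 - t) ⊆ Ioo (0 : ℝ) 1 := Ioo_subset_Ioo_right (by linarith [ht.1])
  have hae : ∀ᵐ s ∂(volume.restrict (Ioo 0 (1 - t))),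
      s ∈ Ioo 0 (1 - t) ∧ derivWithin φ (Ioi s) s = deriv φ s := by
    filter_upwards [ae_restrict_of_ae (ae_rightDeriv_eq hmono), ae_restrict_mem measurableSet_Ioo]
      with s hs hs2 using ⟨hs2, hs (hsub hs2)⟩
  have hmass : IntegrableOn (deriv φ) (Ioo 0 (1 - t)) := by
    refine Integrable.congr ((integrableOn_rightDeriv hconc hmono h0 h0').mono_set
      (hsub.trans Ioo_subset_Ioc_self)) ?_
    filter_upwards [hae] with s hs using hs.2
  rw [integral_Ioc_eq_integral_Ioo, ofReal_integral_eq_lintegral_ofReal]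
  · refine lintegral_congr_ae ?_
    filter_upwards [hae] with s hs
    rw [decWeight_of_mem φ (hsub hs.1), hs.2,
      ENNReal.ofReal_div_of_pos (by linarith [ht.1, hs.1.1])]
  · refine Integrable.mono' (hmass.norm.div_const t) ?_ ?_
    · exact ((measurable_deriv φ).div (by fun_prop)).aestronglyMeasurable
    · filter_upwards [hae] with s hs
      have h1 : 0 < t + s := by linarith [ht.1, hs.1.1]
      rw [norm_div, Real.norm_of_nonneg h1.le]
      exact div_le_div_of_nonneg_left (norm_nonneg _) ht.1 (by linarith [hs.1.1])
  · filter_upwards [hae] with s hs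
    rw [← hs.2]
    exact div_nonneg (rightDeriv_nonneg hconc hmono (hsub hs.1)) (by linarith [ht.1, hs.1.1])

lemma lintegral_Ici_indicator (k : ℝ → ℝ≥0∞) {t : ℝ} (ht : t ∈ Ioo (0 : ℝ) 1) :
    ∫⁻ x, (Ici t).indicator k x ∂unitMeasure = ∫⁻ x in Ioo t 1, k x := by
  rw [lintegral_indicator measurableSet_Ici, Measure.restrict_restrict measurableSet_Ici]
  have : Ici t ∩ Icc 0 1 = Icc t 1 := by
    ext x
    simp only [mem_inter_iff, mem_Ici, mem_Icc]
    exact ⟨fun h => ⟨h.1, h.2.2⟩, fun h => ⟨h.1, ht.1.le.trans h.1, h.2⟩⟩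
  rw [this, Measure.restrict_congr_set Ioo_ae_eq_Icc]

lemma lintegral_shift (R : ℝ → ℝ≥0∞) (t : ℝ) :
    ∫⁻ x in Ioo t 1, R (x - t) / ENNReal.ofReal x =
      ∫⁻ s in Ioo 0 (1 - t), R s / ENNReal.ofReal (t + s) := by
  have h := (measurePreserving_sub_right (volume : Measure ℝ) t).setLIntegral_comp_preimage_emb
    (MeasurableEquiv.subRight t).measurableEmbedding
    (fun s => R s / ENNReal.ofReal (t + s)) (Ioo 0 (1 - t))
  rw [← h]
  have : (fun x => x - t) ⁻¹' Ioo 0 (1 - t) = Ioo t 1 := by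
    ext x; simp
  rw [this]
  simp

lemma lintegral_reflect (R : ℝ → ℝ≥0∞) (t : ℝ) :
    ∫⁻ x in Ioo t 1, R (1 - x) = ∫⁻ s in Ioo 0 (1 - t), R s := by
  have h := (Measure.measurePreserving_sub_left (volume : Measure ℝ) 1).setLIntegral_comp_preimage_emb
    (MeasurableEquiv.subLeft 1).measurableEmbedding R (Ioo 0 (1 - t))
  rw [← h]
  congr 2
  ext x; simp

/-! ### The lower estimate -/

/-- The condition `p_φ^0 > 0` forces `φ̄⁰(s) ≤ 1/2` for some small `s`, which is a reverse doubling
inequality with `K = 1/s`. -/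
lemma exists_reverse_doubling {φ : ℝ → ℝ} (hmono : StrictMonoOn φ (Icc 0 1)) (h0 : φ 0 = 0)
    (hp : ∃ p > (0 : ℝ),
      Tendsto (fun s => Real.log (phibarZero φ s) / Real.log s) (𝓝[>] 0) (𝓝 p)) :
    ∃ K : ℝ, 2 ≤ K ∧ ∀ t, 0 < t → K * t ≤ 1 → 2 * φ t ≤ φ (K * t) := by
  obtain ⟨p, hp0, hp⟩ := hp
  have hlog : ∀ᶠ s in 𝓝[>] (0 : ℝ), Real.log s < Real.log (1 / 2) / (p / 2) :=
    Real.tendsto_log_nhdsGT_zero.eventually_lt_atBot _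
  have hsmall : ∀ᶠ s in 𝓝[>] (0 : ℝ), s ∈ Ioo (0 : ℝ) (1 / 2) :=
    Ioo_mem_nhdsGT (by norm_num)
  obtain ⟨s, hs1, hs2, hs3⟩ :=
    ((hp.eventually_const_lt (half_lt_self hp0)).and (hlog.and hsmall)).exists
  have hφpos : ∀ x, 0 < x → x ≤ 1 → 0 < φ x := fun x hx hx1 => by
    have := hmono (a := 0) (b := x) (by simp) ⟨hx.le, hx1⟩ hx
    rwa [h0] at this
  have hmin : min 1 (1 / s) = 1 := by
    rw [min_eq_left]
    rw [le_div_iff₀ hs3.1]; linarith [hs3.2]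
  have hbdd : BddAbove (range fun t : {t : ℝ // 0 < t ∧ t ≤ min 1 (1 / s)} =>
      φ (s * t) / φ t) := by
    refine ⟨1, ?_⟩
    rintro _ ⟨⟨t, ht0, ht1⟩, rfl⟩
    rw [hmin] at ht1
    refine div_le_one_of_le₀ ?_ (hφpos t ht0 ht1).le
    have hst : s * t ≤ t := by nlinarith [hs3.2, hs3.1]
    exact hmono.monotoneOn ⟨(mul_pos hs3.1 ht0).le, hst.trans ht1⟩ ⟨ht0.le, ht1⟩ hst
  have hle : ∀ t, 0 < t → t ≤ 1 → φ (s * t) / φ t ≤ phibarZero φ s := fun t ht0 ht1 =>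
    le_ciSup hbdd (⟨t, ht0, by rwa [hmin]⟩ : {t : ℝ // 0 < t ∧ t ≤ min 1 (1 / s)})
  have hpos : 0 < phibarZero φ s := by
    refine lt_of_lt_of_le ?_ (hle 1 one_pos le_rfl)
    refine div_pos (hφpos _ (by linarith [hs3.1]) (by linarith [hs3.2])) (hφpos 1 one_pos le_rfl)
  have hlogneg : Real.log s < 0 := Real.log_neg hs3.1 (by linarith [hs3.2])
  have hhalf : phibarZero φ s < 1 / 2 := by
    rw [← Real.log_lt_log_iff hpos (by norm_num)]
    rw [lt_div_iff_of_neg hlogneg] at hs1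
    rw [lt_div_iff₀ (by linarith)] at hs2
    linarith
  refine ⟨1 / s, ?_, fun t ht hKt => ?_⟩
  · rw [le_div_iff₀ hs3.1]; linarith [hs3.2]
  · have hKpos : 0 < 1 / s * t := mul_pos (one_div_pos.2 hs3.1) ht
    have h := (hle _ hKpos hKt).trans hhalf.le
    have hs0 : s ≠ 0 := hs3.1.ne'
    rw [show s * (1 / s * t) = t by field_simp, div_le_iff₀ (hφpos _ hKpos hKt)] at h
    linarith

/-- The weight of the statement is controlled by `∫_t^1 φ'(x)/x dx`, which matters near `t = 0`, and
`φ(1-t)`, which matters near `t = 1`; the Hardy–Littlewood inequality bounds `∫ |f|` against each of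
the two by the Cesàro–Lorentz norm. -/
lemma weight_le {φ : ℝ → ℝ} (hconc : ConcaveOn ℝ (Icc 0 1) φ)
    (hmono : StrictMonoOn φ (Icc 0 1)) (h0 : φ 0 = 0) (h0' : Tendsto φ (𝓝[>] 0) (𝓝 0))
    {K : ℝ} (hK : 2 ≤ K) (hdbl : ∀ t, 0 < t → K * t ≤ 1 → 2 * φ t ≤ φ (K * t))
    {t : ℝ} (ht : t ∈ Ioo (0 : ℝ) 1) :
    ∫⁻ s in Ioo 0 (1 - t), decWeight φ s / ENNReal.ofReal (t + s) ≤
      ENNReal.ofReal (K + 1) * ((∫⁻ x in Ioo t 1, decWeight φ x / ENNReal.ofReal x) +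
        ENNReal.ofReal (φ (1 - t))) := by
  have hRm : Measurable (decWeight φ) := (antitone_decWeight hconc).measurable
  have ht0 := ht.1
  have ht1 := ht.2
  -- replacing `1/(t+s)` by the larger constant `1/c`
  have hconst : ∀ c b : ℝ, 0 < c → c ≤ t → 0 ≤ b → b ≤ 1 →
      ∫⁻ s in Ioo 0 b, decWeight φ s / ENNReal.ofReal (t + s) ≤
        ENNReal.ofReal (1 / c) * ENNReal.ofReal (φ b) := by
    intro c b hc hct hb0 hb1
    have h := lintegral_decWeight hconc hmono h0 h0' le_rfl hb0 hb1
    rw [h0, sub_zero] at h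
    rw [← h, ← lintegral_const_mul _ hRm]
    refine setLIntegral_mono' measurableSet_Ioo fun s hs => ?_
    rw [div_eq_mul_inv, mul_comm, one_div, ENNReal.ofReal_inv_of_pos hc]
    gcongr
    linarith [hs.1]
  rcases le_or_gt (1 / 2) t with hcase | hcase
  · refine (hconst (1 / 2) (1 - t) (by norm_num) hcase (by linarith) (by linarith)).trans ?_
    refine mul_le_mul' (ENNReal.ofReal_le_ofReal (by norm_num; linarith)) le_add_self
  · have hsplit : ∫⁻ s in Ioo 0 (1 - t), decWeight φ s / ENNReal.ofReal (t + s) ≤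
        ENNReal.ofReal (1 / t) * ENNReal.ofReal (φ t) +
          ∫⁻ x in Ioo t 1, decWeight φ x / ENNReal.ofReal x := by
      have hss : Ioo 0 (1 - t) ⊆ Ioo 0 t ∪ Ico t 1 := by
        intro s hs
        rcases lt_or_ge s t with h | h
        · exact Or.inl ⟨hs.1, h⟩
        · exact Or.inr ⟨h, by linarith [hs.2]⟩
      refine (lintegral_mono_set hss).trans ((lintegral_union_le _ _ _).trans ?_)
      refine add_le_add (hconst t t ht0 le_rfl ht0.le ht1.le) ?_
      rw [Measure.restrict_congr_set (Ioo_ae_eq_Ico (a := t) (b := (1 : ℝ))).symm]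
      refine setLIntegral_mono' measurableSet_Ioo fun s hs => ?_
      gcongr
      linarith
    refine hsplit.trans ?_
    have hK1 : ENNReal.ofReal (K + 1) = ENNReal.ofReal K + 1 := by
      rw [ENNReal.ofReal_add (by linarith) zero_le_one, ENNReal.ofReal_one]
    -- for `K * t ≤ 1`, reverse doubling gives `φ(t) ≤ φ(Kt) - φ(t) = ∫_t^{Kt} φ'`, and `1/t ≤ K/x`
    -- on that range; otherwise `1/t < K` and `t ≤ 1 - t`
    have hmain : ENNReal.ofReal (1 / t) * ENNReal.ofReal (φ t) ≤
        ENNReal.ofReal K * ((∫⁻ x in Ioo t 1, decWeight φ x / ENNReal.ofReal x) +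
          ENNReal.ofReal (φ (1 - t))) := by
      rcases le_or_gt (K * t) 1 with hKt | hKt
      · have htK : t ≤ K * t := by nlinarith
        calc ENNReal.ofReal (1 / t) * ENNReal.ofReal (φ t)
            ≤ ENNReal.ofReal (1 / t) * ENNReal.ofReal (φ (K * t) - φ t) := by
              gcongr
              linarith [hdbl t ht0 hKt]
          _ = ∫⁻ x in Ioo t (K * t), ENNReal.ofReal (1 / t) * decWeight φ x := by
              rw [lintegral_const_mul _ hRm,
                lintegral_decWeight hconc hmono h0 h0' ht0.le htK hKt]
          _ ≤ ∫⁻ x in Ioo t (K * t), ENNReal.ofReal K * (decWeight φ x / ENNReal.ofReal x) := by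
              refine setLIntegral_mono' measurableSet_Ioo fun x hx => ?_
              have hx0 : 0 < x := ht0.trans hx.1
              have : 1 / t ≤ K * x⁻¹ := by
                rw [div_le_iff₀ ht0, mul_assoc, mul_comm x⁻¹, ← mul_assoc,
                  ← div_eq_mul_inv, le_div_iff₀ hx0]
                linarith [hx.2]
              calc ENNReal.ofReal (1 / t) * decWeight φ x
                  ≤ ENNReal.ofReal (K * x⁻¹) * decWeight φ x := by gcongr
                _ = _ := by
                  rw [ENNReal.ofReal_mul (by linarith), ENNReal.ofReal_inv_of_pos hx0,
                    div_eq_mul_inv]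
                  ring
          _ = ENNReal.ofReal K * ∫⁻ x in Ioo t (K * t), decWeight φ x / ENNReal.ofReal x :=
              lintegral_const_mul _ (by fun_prop)
          _ ≤ _ := by
              gcongr
              exact (lintegral_mono_set (Ioo_subset_Ioo_right hKt)).trans le_self_add
      · refine mul_le_mul' (ENNReal.ofReal_le_ofReal ?_) (le_trans ?_ le_add_self)
        · rw [div_le_iff₀ ht0]; exact hKt.le
        · exact ENNReal.ofReal_le_ofReal (hmono.monotoneOn ⟨ht0.le, ht1.le⟩
            ⟨by linarith, by linarith⟩ (by linarith))
    rw [hK1, add_mul, one_mul]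
    exact add_le_add hmain le_self_add

/-- Let `φ : [0,1] → [0,∞)` be concave, strictly increasing, with
`φ(0) = 0`, `lim_{t→0+} φ(t) = 0`, and indices `0 < p_φ^0` and `q_φ^0 < 1` (the limits
defining `p_φ^0` and `q_φ^0` exist, with the stated bounds).  Then
`CΛ_φ[0,1] = L₁(w)` with `w(t) = ∫_0^{1−t} φ'(s)/(t+s) ds`, with equivalence of norms:
there are `c, C > 0` with
`c ∫_0^1 |f| w ≤ ‖C|f|‖_{Λ_φ} ≤ C ∫_0^1 |f| w` for all (classes of) measurable `f`. -/
theorem cesaro_lorentz_01_eq_weighted_L1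
    (φ : ℝ → ℝ) (hconc : ConcaveOn ℝ (Set.Icc 0 1) φ)
    (hmono : StrictMonoOn φ (Set.Icc 0 1)) (h0 : φ 0 = 0)
    (h0' : Tendsto φ (𝓝[>] 0) (𝓝 0))
    (hp : ∃ p > (0 : ℝ),
      Tendsto (fun s => Real.log (phibarZero φ s) / Real.log s) (𝓝[>] 0) (𝓝 p))
    (hq : ∃ q < (1 : ℝ),
      Tendsto (fun s => Real.log (phibarZero φ s) / Real.log s) atTop (𝓝 q)) :
    ∃ c > (0 : ℝ), ∃ C > (0 : ℝ),
      ∀ f : ℝ →ₘ[volume.restrict (Set.Icc 0 1)] ℝ,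
        ENNReal.ofReal c *
            (∫⁻ t in Set.Ioc (0 : ℝ) 1, ENNReal.ofReal |f t| *
              ENNReal.ofReal (∫ s in Set.Ioc (0 : ℝ) (1 - t), deriv φ s / (t + s))) ≤
          cesaroLorentzFunNorm φ f ∧
        cesaroLorentzFunNorm φ f ≤ ENNReal.ofReal C *
          ∫⁻ t in Set.Ioc (0 : ℝ) 1, ENNReal.ofReal |f t| *
            ENNReal.ofReal (∫ s in Set.Ioc (0 : ℝ) (1 - t), deriv φ s / (t + s)) := by
  obtain ⟨K, hK, hdbl⟩ := exists_reverse_doubling hmono h0 hp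
  have hR := antitone_decWeight hconc
  have hRm : Measurable (decWeight φ) := hR.measurable
  have hIoc : volume.restrict (Ioc (0 : ℝ) 1) = unitMeasure :=
    Measure.restrict_congr_set Ioc_ae_eq_Icc
  have hKpos : 0 < K + 1 := by linarith
  refine ⟨1 / (2 * (K + 1)), by positivity, 1, one_pos, fun f => ?_⟩
  have hF := measurable_abs_coe f
  have hnorm : cesaroLorentzFunNorm φ f =
      ∫⁻ s, decRearrFun01 (cesaroFun01 f) s * decWeight φ s ∂unitMeasure := by
    rw [cesaroLorentzFunNorm, hIoc]
    refine lintegral_congr_ae ?_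
    filter_upwards [ae_unitMeasure, ae_restrict_of_ae (ae_rightDeriv_eq hmono)] with s hs hs2
    rw [decWeight_of_mem φ hs, hs2 hs]
  have hweight : ∫⁻ t in Set.Ioc (0 : ℝ) 1, ENNReal.ofReal |f t| *
        ENNReal.ofReal (∫ s in Set.Ioc (0 : ℝ) (1 - t), deriv φ s / (t + s)) =
      ∫⁻ t, ENNReal.ofReal |f t| *
        (∫⁻ s in Ioo 0 (1 - t), decWeight φ s / ENNReal.ofReal (t + s)) ∂unitMeasure := by
    rw [hIoc]
    refine lintegral_congr_ae ?_
    filter_upwards [ae_unitMeasure] with t ht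
    rw [weight_eq hconc hmono h0 h0' ht]
  rw [hweight, hnorm]
  constructor
  · have hl1 := hardy_littlewood (measurable_cesaro f) hR
    have hl2 := hardy_littlewood_reflect (measurable_cesaro f) hR
    rw [lintegral_cesaro_mul f hRm] at hl1
    rw [lintegral_cesaro_mul f (ψ := fun x => decWeight φ (1 - x)) (by fun_prop)] at hl2
    have hH : Measurable fun t => ENNReal.ofReal |f t| * ∫⁻ x, (Ici t).indicator
        (fun x => decWeight φ x / ENNReal.ofReal x) x ∂unitMeasure := by
      refine hF.mul (Antitone.measurable fun a b hab => ?_)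
      exact lintegral_mono fun x => indicator_le_indicator_of_subset
        (Ici_subset_Ici.2 hab) (fun _ => zero_le) x
    -- the norm dominates `∫ |f|` against both test weights, whose sum dominates the weight
    set N := ∫⁻ s, decRearrFun01 (cesaroFun01 f) s * decWeight φ s ∂unitMeasure
    have hkey : ∫⁻ t, ENNReal.ofReal |f t| *
        (∫⁻ s in Ioo 0 (1 - t), decWeight φ s / ENNReal.ofReal (t + s)) ∂unitMeasure ≤
          ENNReal.ofReal (K + 1) * (N + N) := by
      refine le_trans ?_ (mul_le_mul_right (add_le_add hl1 hl2) _)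
      rw [← lintegral_add_left hH, ← lintegral_const_mul' _ _ ENNReal.ofReal_ne_top]
      refine lintegral_mono_ae ?_
      filter_upwards [ae_unitMeasure] with t ht
      rw [← mul_add, mul_left_comm]
      refine mul_le_mul_right ((weight_le hconc hmono h0 h0' hK hdbl ht).trans ?_) _
      rw [lintegral_Ici_indicator _ ht, lintegral_Ici_indicator _ ht]
      refine mul_le_mul_right (add_le_add le_rfl ?_) _
      have h := lintegral_decWeight hconc hmono h0 h0' le_rfl (sub_nonneg.2 ht.2.le)
        (by linarith [ht.1] : 1 - t ≤ 1)
      rw [h0, sub_zero, ← lintegral_reflect] at h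
      rw [← h]
      refine setLIntegral_mono' measurableSet_Ioo fun x hx => ?_
      rw [div_eq_mul_inv]
      refine le_mul_of_one_le_right zero_le (ENNReal.one_le_inv.2 ?_)
      rw [← ENNReal.ofReal_one]
      exact ENNReal.ofReal_le_ofReal hx.2.le
    refine (mul_le_mul_right hkey _).trans (le_of_eq ?_)
    rw [← mul_assoc, ← ENNReal.ofReal_mul (by positivity), ← two_mul, ← mul_assoc]
    have : ENNReal.ofReal (1 / (2 * (K + 1)) * (K + 1)) * 2 = 1 := by
      rw [← ENNReal.ofReal_ofNat 2, ← ENNReal.ofReal_mul (by positivity), ← ENNReal.ofReal_one]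
      congr 1
      field_simp
    rw [this, one_mul]
  · rw [ENNReal.ofReal_one, one_mul]
    refine (upper_estimate f hR).trans (le_of_eq (lintegral_congr_ae ?_))
    filter_upwards [ae_unitMeasure] with t ht
    rw [lintegral_Ici_indicator _ ht, lintegral_shift]

end
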